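/- Let g:(ℝ,0)→(ℝ^3,0) be the curve-germ g(t) = (t^4,t^5,t^6). For every sign ε∈{+1,−1} and all real numbers c_1≠0, c_2, c_3, there exist germs of diffeomorphisms Φ:(ℝ^3,0)→(ℝ^3,0) and φ:(ℝ,0)→(ℝ,0) with Φ∘g = g∘φ near 0 such that the pullback Φ^*(ε·dx_1∧dx_3 + c_1·dx_2∧dx_3 + c_2·x_1dx_1∧dx_2 + c_3·x_3dx_2∧dx_3) and the 2-form ε·dx_1∧dx_3 + c_1·dx_2∧dx_3 + c_2·x_1dx_1∧dx_2 have the same algebraic restriction to g. -/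

import Mathlib

open Filter Topology

noncomputable section

/-- A (set-theoretic) differential 1-form on `ℝ^m`: a map assigning to each point a
function on tangent vectors. -/
def Form1 (m : ℕ) := (Fin m → ℝ) → (Fin m → ℝ) → ℝ

/-- A (set-theoretic) differential 2-form on `ℝ^m`. -/
def Form2 (m : ℕ) := (Fin m → ℝ) → (Fin m → ℝ) → (Fin m → ℝ) → ℝ

/-- A germ at `0` of a smooth differential 1-form: pointwise linear in the tangent
vector, and with coefficients smooth on a neighbourhood of `0`. -/
def IsForm1 (m : ℕ) (β : Form1 m) : Prop :=
  (∀ x u₁ u₂ (c : ℝ), β x (u₁ + c • u₂) = β x u₁ + c * β x u₂) ∧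
  (∀ u, ∃ U ∈ 𝓝 (0 : Fin m → ℝ), ContDiffOn ℝ (⊤ : ℕ∞) (fun x => β x u) U)

/-- A germ at `0` of a smooth differential 2-form: pointwise bilinear and alternating
in the tangent vectors, with coefficients smooth on a neighbourhood of `0`. -/
def IsForm2 (m : ℕ) (ω : Form2 m) : Prop :=
  (∀ x u₁ u₂ v (c : ℝ), ω x (u₁ + c • u₂) v = ω x u₁ v + c * ω x u₂ v) ∧
  (∀ x u v, ω x u v = - ω x v u) ∧
  (∀ u v, ∃ U ∈ 𝓝 (0 : Fin m → ℝ), ContDiffOn ℝ (⊤ : ℕ∞) (fun x => ω x u v) U)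

/-- The exterior derivative of a 1-form, evaluated on a pair of (constant) vectors. -/
def extD1 (m : ℕ) (β : Form1 m) : Form2 m :=
  fun x u v => fderiv ℝ (fun y => β y v) x u - fderiv ℝ (fun y => β y u) x v

/-- The exterior derivative of a 2-form, evaluated on a triple of (constant) vectors. -/
def extD2 (m : ℕ) (ω : Form2 m) (x u v w : Fin m → ℝ) : ℝ :=
  fderiv ℝ (fun y => ω y v w) x u - fderiv ℝ (fun y => ω y u w) x v
    + fderiv ℝ (fun y => ω y u v) x w

/-- A 2-form is closed near `0` if its exterior derivative vanishes near `0`. -/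
def Closed2 (m : ℕ) (ω : Form2 m) : Prop :=
  ∀ᶠ x in 𝓝 (0 : Fin m → ℝ), ∀ u v w, extD2 m ω x u v w = 0

/-- A 1-form vanishes on the image of a curve-germ. -/
def VanishesOn1 (m : ℕ) (β : Form1 m) (f : ℝ → (Fin m → ℝ)) : Prop :=
  ∀ᶠ t in 𝓝 (0 : ℝ), ∀ u, β (f t) u = 0

/-- A 2-form vanishes on the image of a curve-germ. -/
def VanishesOn2 (m : ℕ) (ω : Form2 m) (f : ℝ → (Fin m → ℝ)) : Prop :=
  ∀ᶠ t in 𝓝 (0 : ℝ), ∀ u v, ω (f t) u v = 0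

/-- A 2-form `ω` has zero algebraic restriction to the curve-germ `f` if `ω = α + dβ`
near `0` for a smooth 2-form `α` and a smooth 1-form `β` both vanishing on `im f`. -/
def ZeroAR2 (m : ℕ) (ω : Form2 m) (f : ℝ → (Fin m → ℝ)) : Prop :=
  ∃ (α : Form2 m) (β : Form1 m), IsForm2 m α ∧ IsForm1 m β ∧
    VanishesOn2 m α f ∧ VanishesOn1 m β f ∧
    ∀ᶠ x in 𝓝 (0 : Fin m → ℝ), ∀ u v, ω x u v = α x u v + extD1 m β x u v

/-- Two 2-forms have the same algebraic restriction to `f` if their difference has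
zero algebraic restriction to `f`. -/
def SameAR2 (m : ℕ) (ω₁ ω₂ : Form2 m) (f : ℝ → (Fin m → ℝ)) : Prop :=
  ZeroAR2 m (fun x u v => ω₁ x u v - ω₂ x u v) f

/-- The pullback of a 2-form by a (germ of) smooth map. -/
def pull2 (m : ℕ) (Φ : (Fin m → ℝ) → (Fin m → ℝ)) (ω : Form2 m) : Form2 m :=
  fun x u v => ω (Φ x) (fderiv ℝ Φ x u) (fderiv ℝ Φ x v)

/-- A germ of diffeomorphism of `(ℝ,0)`. -/
def IsDiffeoGerm1 (φ : ℝ → ℝ) : Prop :=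
  φ 0 = 0 ∧ (∃ U ∈ 𝓝 (0 : ℝ), ContDiffOn ℝ (⊤ : ℕ∞) φ U) ∧ deriv φ 0 ≠ 0

/-- A germ of diffeomorphism of `(ℝ^m,0)`. -/
def IsDiffeoGerm (m : ℕ) (Φ : (Fin m → ℝ) → (Fin m → ℝ)) : Prop :=
  Φ 0 = 0 ∧ (∃ U ∈ 𝓝 (0 : Fin m → ℝ), ContDiffOn ℝ (⊤ : ℕ∞) Φ U) ∧
    ∃ D : (Fin m → ℝ) ≃L[ℝ] (Fin m → ℝ),
      HasFDerivAt Φ (D : (Fin m → ℝ) →L[ℝ] (Fin m → ℝ)) 0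

/-- The constant 2-form `dxᵢ ∧ dxⱼ` on `ℝ^m` (indices `0`-based). -/
def wedge (m : ℕ) (i j : Fin m) : Form2 m := fun _ u v => u i * v j - u j * v i

/-- The 2-form `x_l · dxᵢ ∧ dxⱼ` on `ℝ^m` (indices `0`-based). -/
def mwedge (m : ℕ) (l i j : Fin m) : Form2 m :=
  fun x u v => x l * (u i * v j - u j * v i)

/-- The monomial curve `g(t) = (t⁴,t⁵,t⁶)`. -/
def g456 : ℝ → (Fin 3 → ℝ) := fun t => ![t^4, t^5, t^6]

/-!
Let `μ` be a closed 2-form of weighted degree `d`, and let `θ` be its contraction with the Euler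
field of the weights `4, 5, 6`. Then `dθ = d • μ`. The scaling `Φ x = (h x ^ wtᵢ • xᵢ)ᵢ` by a
function `h` maps the monomial curve to itself, and `Φ^*θ = h ^ d • θ`. Hence `c • Φ^*μ - c' • μ` is
the differential of `((c h ^ d - c') / d) • θ`, and the difference of the two forms of the theorem
has an explicit primitive. On the curve this primitive is `P₀ dH₀ + P₁ dH₁`, where `H₀`, `H₁`
generate the ideal of the curve and `P₀`, `P₁` are functions of `t`. If the `Pᵢ` extend to smooth
functions on `ℝ³`, the primitive agrees along the curve with the exact form `d(P₀ H₀ + P₁ H₁)`, so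
its differential has zero algebraic restriction. In coordinates `x₀, x₁, x₂` and for
`h = 1 + a x₂ + b x₀ ^ 2`, the only obstruction to the extension is a term in `t ^ 7` of each `Pᵢ`;
as `c₁ ≠ 0`, both can be cancelled by a choice of `a` and `b`.
-/

open scoped ContDiff Polynomial

section ExteriorDerivative

variable {m : ℕ}

/-- The 1-form given by a field `B` of covectors. Bundling the linearity in the tangent vector
makes the calculus of continuous linear maps available. -/
def covectorForm (B : (Fin m → ℝ) → (Fin m → ℝ) →L[ℝ] ℝ) : Form1 m := fun x u => B x u

theorem isForm1_covectorForm {B : (Fin m → ℝ) → (Fin m → ℝ) →L[ℝ] ℝ} (hB : ContDiff ℝ ∞ B) :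
    IsForm1 m (covectorForm B) :=
  ⟨fun x u₁ u₂ c => by simp [covectorForm],
    fun u => ⟨Set.univ, univ_mem, (hB.clm_apply contDiff_const).contDiffOn⟩⟩

theorem extD1_covectorForm {B : (Fin m → ℝ) → (Fin m → ℝ) →L[ℝ] ℝ} {x : Fin m → ℝ}
    (hB : DifferentiableAt ℝ B x) (u v : Fin m → ℝ) :
    extD1 m (covectorForm B) x u v = fderiv ℝ B x u v - fderiv ℝ B x v u := by
  simp [extD1, covectorForm, fderiv_clm_apply hB (differentiableAt_const _)]

theorem extD1_covectorForm_add {A B : (Fin m → ℝ) → (Fin m → ℝ) →L[ℝ] ℝ} {x : Fin m → ℝ}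
    (hA : DifferentiableAt ℝ A x) (hB : DifferentiableAt ℝ B x) (u v : Fin m → ℝ) :
    extD1 m (covectorForm (A + B)) x u v
      = extD1 m (covectorForm A) x u v + extD1 m (covectorForm B) x u v := by
  rw [extD1_covectorForm (hA.add hB), extD1_covectorForm hA, extD1_covectorForm hB,
    fderiv_add hA hB]
  simp only [add_apply]
  ring

theorem extD1_covectorForm_const_smul {B : (Fin m → ℝ) → (Fin m → ℝ) →L[ℝ] ℝ} {x : Fin m → ℝ}
    (hB : DifferentiableAt ℝ B x) (c : ℝ) (u v : Fin m → ℝ) :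
    extD1 m (covectorForm (c • B)) x u v = c * extD1 m (covectorForm B) x u v := by
  rw [extD1_covectorForm (hB.const_smul c), extD1_covectorForm hB, fderiv_const_smul hB]
  simp only [smul_apply, smul_eq_mul]
  ring

theorem extD1_covectorForm_sub {A B : (Fin m → ℝ) → (Fin m → ℝ) →L[ℝ] ℝ} {x : Fin m → ℝ}
    (hA : DifferentiableAt ℝ A x) (hB : DifferentiableAt ℝ B x) (u v : Fin m → ℝ) :
    extD1 m (covectorForm (A - B)) x u v
      = extD1 m (covectorForm A) x u v - extD1 m (covectorForm B) x u v := by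
  rw [extD1_covectorForm (hA.sub hB), extD1_covectorForm hA, extD1_covectorForm hB,
    fderiv_sub hA hB]
  simp only [sub_apply]
  ring

theorem extD1_fderiv {F : (Fin m → ℝ) → ℝ} {x : Fin m → ℝ} (hF : ContDiffAt ℝ 2 F x)
    (u v : Fin m → ℝ) : extD1 m (covectorForm (fderiv ℝ F)) x u v = 0 := by
  have hF' : DifferentiableAt ℝ (fderiv ℝ F) x :=
    (hF.fderiv_right (m := 1) le_rfl).differentiableAt one_ne_zero
  have hsymm : IsSymmSndFDerivAt ℝ F x := hF.isSymmSndFDerivAt (by simp)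
  rw [extD1_covectorForm hF', hsymm u v, sub_self]

theorem extD1_pullback {B : (Fin m → ℝ) → (Fin m → ℝ) →L[ℝ] ℝ} {Φ : (Fin m → ℝ) → (Fin m → ℝ)}
    {x : Fin m → ℝ} (hB : DifferentiableAt ℝ B (Φ x)) (hΦ : ContDiffAt ℝ 2 Φ x)
    (u v : Fin m → ℝ) :
    extD1 m (covectorForm fun y => (B (Φ y)).comp (fderiv ℝ Φ y)) x u v
      = pull2 m Φ (extD1 m (covectorForm B)) x u v := by
  have hΦ' : DifferentiableAt ℝ (fderiv ℝ Φ) x :=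
    (hΦ.fderiv_right (m := 1) le_rfl).differentiableAt one_ne_zero
  have hΦx : DifferentiableAt ℝ Φ x := hΦ.differentiableAt two_ne_zero
  have hBΦ : DifferentiableAt ℝ (fun y => B (Φ y)) x := hB.comp x hΦx
  have hsymm : IsSymmSndFDerivAt ℝ Φ x := hΦ.isSymmSndFDerivAt (by simp)
  rw [extD1_covectorForm (hBΦ.clm_comp hΦ'), fderiv_clm_comp hBΦ hΦ',
    fderiv_fun_comp x hB hΦx, pull2, extD1_covectorForm hB]
  simp [hsymm u v]

end ExteriorDerivative

section AlgebraicRestriction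

variable {m : ℕ}

/-- The algebra of functions of the parameter that are pullbacks, under the curve `f`, of smooth
functions on the ambient space. -/
def curveFunctions (f : ℝ → Fin m → ℝ) : Subalgebra ℝ (ℝ → ℝ) where
  carrier := {q | ∃ F : (Fin m → ℝ) → ℝ, ContDiff ℝ ∞ F ∧ ∀ t, F (f t) = q t}
  mul_mem' := by
    rintro _ _ ⟨F, hF, hFq⟩ ⟨G, hG, hGr⟩
    exact ⟨F * G, hF.mul hG, fun t => by simp [hFq, hGr]⟩
  add_mem' := by
    rintro _ _ ⟨F, hF, hFq⟩ ⟨G, hG, hGr⟩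
    exact ⟨F + G, hF.add hG, fun t => by simp [hFq, hGr]⟩
  algebraMap_mem' c := ⟨fun _ => c, contDiff_const, fun _ => rfl⟩

theorem coordinate_mem_curveFunctions (f : ℝ → Fin m → ℝ) (i : Fin m) :
    (fun t => f t i) ∈ curveFunctions f :=
  ⟨fun x => x i, contDiff_apply ℝ ℝ i, fun _ => rfl⟩

theorem zeroAR2_extD1_of_vanishesOn1 {f : ℝ → Fin m → ℝ} {β : Form1 m} (hβ : IsForm1 m β)
    (hβf : VanishesOn1 m β f) : ZeroAR2 m (extD1 m β) f :=
  ⟨fun _ _ _ => 0, β, ⟨by simp, by simp, fun _ _ => ⟨Set.univ, univ_mem, contDiffOn_const⟩⟩, hβ,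
    .of_forall fun _ _ _ => rfl, hβf, .of_forall fun _ _ _ => (zero_add _).symm⟩

/-- In `∑ Pᵢ dHᵢ = d(∑ Pᵢ Hᵢ) - ∑ Hᵢ dPᵢ` the first term is closed and the second vanishes on the
curve. -/
theorem zeroAR2_extD1_of_eq_sum_fderiv {ι : Type*} [Fintype ι] {f : ℝ → Fin m → ℝ}
    {B : (Fin m → ℝ) → (Fin m → ℝ) →L[ℝ] ℝ} (hB : ContDiff ℝ ∞ B)
    {H : ι → (Fin m → ℝ) → ℝ} (hH : ∀ i, ContDiff ℝ ∞ (H i)) (hHf : ∀ i t, H i (f t) = 0)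
    {P : ι → ℝ → ℝ} (hP : ∀ i, P i ∈ curveFunctions f)
    (hBf : ∀ t, B (f t) = ∑ i, P i t • fderiv ℝ (H i) (f t)) :
    ZeroAR2 m (extD1 m (covectorForm B)) f := by
  choose p hp hpP using hP
  let F : (Fin m → ℝ) → ℝ := fun x => ∑ i, p i x * H i x
  have hF : ContDiff ℝ ∞ F := ContDiff.sum fun i _ => (hp i).mul (hH i)
  have hF' : ContDiff ℝ ∞ (fderiv ℝ F) := hF.fderiv_right (m := ∞) le_rfl
  have hFf (t : ℝ) : fderiv ℝ F (f t) = B (f t) := by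
    have hd {G : (Fin m → ℝ) → ℝ} (hG : ContDiff ℝ ∞ G) : DifferentiableAt ℝ G (f t) :=
      hG.contDiffAt.differentiableAt (by simp)
    simp only [F, hBf]
    rw [fderiv_fun_sum (A := fun i x => p i x * H i x) fun i _ => (hd (hp i)).mul (hd (hH i))]
    simp only [fderiv_fun_mul (hd (hp _)) (hd (hH _)), hHf, hpP, zero_smul, add_zero]
  have hextD1 : extD1 m (covectorForm B) = extD1 m (covectorForm (B - fderiv ℝ F)) := by
    funext x u v
    rw [extD1_covectorForm_sub (hB.differentiable (by simp) x) (hF'.differentiable (by simp) x),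
      extD1_fderiv (hF.contDiffAt.of_le (by norm_cast)), sub_zero]
  rw [hextD1]
  exact zeroAR2_extD1_of_vanishesOn1 (isForm1_covectorForm (hB.sub hF'))
    (.of_forall fun t u => by simp [covectorForm, hFf])

end AlgebraicRestriction

section WeightedScaling

variable {m : ℕ}

/-- The weighted dilation `xᵢ ↦ h ^ wtᵢ • xᵢ` with a scaling factor `h` that depends on the
point. -/
def weightedScale (wt : Fin m → ℕ) (h : (Fin m → ℝ) → ℝ) (x : Fin m → ℝ) : Fin m → ℝ :=
  fun i => h x ^ wt i * x i

/-- The monomial curve `t ↦ (t ^ wt₁, …, t ^ wtₘ)`. -/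
def monomialCurve (wt : Fin m → ℕ) (t : ℝ) : Fin m → ℝ := fun i => t ^ wt i

/-- The 2-form `xᵢ ^ p xⱼ ^ q dxᵢ ∧ dxⱼ`, which is closed. -/
def monomialForm (i j : Fin m) (p q : ℕ) : Form2 m :=
  fun x u v => x i ^ p * x j ^ q * (u i * v j - u j * v i)

/-- The degree of `monomialForm i j p q` under the weighted dilations. -/
def monomialFormDegree (wt : Fin m → ℕ) (i j : Fin m) (p q : ℕ) : ℕ :=
  wt i * (p + 1) + wt j * (q + 1)

/-- The contraction of `monomialForm i j p q` with the Euler vector field `∑ₖ wtₖ xₖ ∂ₖ`. -/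
def eulerContraction (wt : Fin m → ℕ) (i j : Fin m) (p q : ℕ) (x : Fin m → ℝ) :
    (Fin m → ℝ) →L[ℝ] ℝ :=
  (wt i * (x i ^ (p + 1) * x j ^ q)) • .proj j - (wt j * (x i ^ p * x j ^ (q + 1))) • .proj i

theorem contDiff_weightedScale {n : ℕ∞ω} (wt : Fin m → ℕ) {h : (Fin m → ℝ) → ℝ}
    (hh : ContDiff ℝ n h) : ContDiff ℝ n (weightedScale wt h) :=
  contDiff_pi.2 fun i => (hh.pow (wt i)).mul (contDiff_apply ℝ ℝ i)

theorem hasFDerivAt_weightedScale (wt : Fin m → ℕ) {h : (Fin m → ℝ) → ℝ} {x : Fin m → ℝ}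
    (hh : DifferentiableAt ℝ h x) :
    HasFDerivAt (weightedScale wt h) (.pi fun i => h x ^ wt i • .proj i
      + x i • (wt i * h x ^ (wt i - 1)) • fderiv ℝ h x) x := by
  refine hasFDerivAt_pi.2 fun i => ?_
  have := (hh.hasFDerivAt.pow (wt i)).fun_mul (hasFDerivAt_apply i x)
  simpa [weightedScale] using this

theorem isDiffeoGerm_weightedScale (wt : Fin m → ℕ) {h : (Fin m → ℝ) → ℝ}
    (hh : ContDiff ℝ ∞ h) (h0 : h 0 ≠ 0) : IsDiffeoGerm m (weightedScale wt h) := by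
  refine ⟨by ext; simp [weightedScale],
    ⟨Set.univ, univ_mem, (contDiff_weightedScale wt hh).contDiffOn⟩,
    .piCongrRight fun i => .unitsEquivAut ℝ (.mk0 _ (pow_ne_zero (wt i) h0)), ?_⟩
  refine (hasFDerivAt_weightedScale wt (hh.differentiable (by simp) 0)).congr_fderiv ?_
  ext u i
  simp [mul_comm]

theorem weightedScale_monomialCurve (wt : Fin m → ℕ) (h : (Fin m → ℝ) → ℝ) (t : ℝ) :
    weightedScale wt h (monomialCurve wt t)
      = monomialCurve wt (t * h (monomialCurve wt t)) := by
  ext i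
  simp only [weightedScale, monomialCurve, mul_pow, mul_comm]

theorem isDiffeoGerm1_id_mul {k : ℝ → ℝ} (hk : ContDiff ℝ ∞ k) (hk0 : k 0 ≠ 0) :
    IsDiffeoGerm1 fun t => t * k t := by
  refine ⟨by simp, ⟨Set.univ, univ_mem, (contDiff_id.mul hk).contDiffOn⟩, ?_⟩
  have hderiv := (hasDerivAt_id' (0 : ℝ)).fun_mul (hk.differentiable (by simp) 0).hasDerivAt
  rw [hderiv.deriv]
  simpa using hk0

theorem contDiff_eulerContraction (wt : Fin m → ℕ) (i j : Fin m) (p q : ℕ) :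
    ContDiff ℝ ∞ (eulerContraction wt i j p q) := by
  unfold eulerContraction
  fun_prop

/-- Cartan's formula for the closed form `monomialForm i j p q`. -/
theorem extD1_eulerContraction (wt : Fin m → ℕ) (i j : Fin m) (p q : ℕ) (x u v : Fin m → ℝ) :
    extD1 m (covectorForm (eulerContraction wt i j p q)) x u v
      = monomialFormDegree wt i j p q * monomialForm i j p q x u v := by
  have hasFDerivAt_coeff (p q : ℕ) := ((hasFDerivAt_apply (𝕜 := ℝ) i x).pow p).mul
    ((hasFDerivAt_apply (𝕜 := ℝ) j x).pow q)
  have hderiv := (((hasFDerivAt_coeff (p + 1) q).const_mul (wt i : ℝ)).smul_const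
      (.proj j : (Fin m → ℝ) →L[ℝ] ℝ)).sub
    (((hasFDerivAt_coeff p (q + 1)).const_mul (wt j : ℝ)).smul_const
      (.proj i : (Fin m → ℝ) →L[ℝ] ℝ))
  have hderiv' : HasFDerivAt (eulerContraction wt i j p q) _ x := hderiv
  rw [extD1_covectorForm hderiv'.differentiableAt, hderiv'.fderiv]
  simp only [monomialForm, monomialFormDegree, sub_apply, add_apply, smul_apply,
    ContinuousLinearMap.smulRight_apply, ContinuousLinearMap.proj_apply, smul_eq_mul, smul_add,
    nsmul_eq_mul, add_tsub_cancel_right, Nat.cast_add, Nat.cast_mul, Nat.cast_one]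
  ring

/-- Both summands of `DΦ(x)u = h ^ wt • u + (dh u / h) E(Φ x)` are homogeneous; the Euler field `E`
in the second one is killed by the contraction. -/
theorem eulerContraction_weightedScale (wt : Fin m → ℕ) (i j : Fin m) (p q : ℕ)
    {h : (Fin m → ℝ) → ℝ} {x : Fin m → ℝ} (hh : DifferentiableAt ℝ h x) :
    (eulerContraction wt i j p q (weightedScale wt h x)).comp (fderiv ℝ (weightedScale wt h) x)
      = h x ^ monomialFormDegree wt i j p q • eulerContraction wt i j p q x := by
  have hcancel : (wt i * h x ^ wt i) * (wt j * h x ^ (wt j - 1))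
      = (wt j * h x ^ wt j) * (wt i * h x ^ (wt i - 1)) := by
    rcases wt i with _ | a <;> rcases wt j with _ | b <;>
      simp only [Nat.cast_zero, zero_mul, mul_zero, Nat.add_sub_cancel]
    ring
  ext1 u
  rw [(hasFDerivAt_weightedScale wt hh).fderiv]
  simp only [eulerContraction, monomialFormDegree, weightedScale, ContinuousLinearMap.sub_comp,
    ContinuousLinearMap.smul_comp, ContinuousLinearMap.proj_pi, smul_add, sub_apply, add_apply,
    smul_apply, ContinuousLinearMap.proj_apply, smul_eq_mul]
  linear_combination (h x ^ wt i * x i) ^ p * (h x ^ wt j * x j) ^ q * x i * x j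
    * fderiv ℝ h x u * hcancel

theorem pull2_weightedScale_monomialForm (wt : Fin m → ℕ) (i j : Fin m) (p q : ℕ)
    {h : (Fin m → ℝ) → ℝ} (hh : ContDiff ℝ 2 h) (x u v : Fin m → ℝ) :
    monomialFormDegree wt i j p q * pull2 m (weightedScale wt h) (monomialForm i j p q) x u v
      = extD1 m (covectorForm fun y =>
          h y ^ monomialFormDegree wt i j p q • eulerContraction wt i j p q y) x u v := by
  have hθ : Differentiable ℝ (eulerContraction wt i j p q) :=
    (contDiff_eulerContraction wt i j p q).differentiable (by simp)
  simp only [← eulerContraction_weightedScale wt i j p q (hh.differentiable two_ne_zero _)]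
  rw [extD1_pullback (hθ _) (contDiff_weightedScale wt hh).contDiffAt, pull2, pull2,
    extD1_eulerContraction]

/-- A primitive of the difference between `c Φ^*μ` and `c' μ`, where `μ` is the monomial 2-form
`monomialForm i j p q` and `Φ` the weighted scaling by `h`. -/
def scalingPrimitive (wt : Fin m → ℕ) (h : (Fin m → ℝ) → ℝ) (i j : Fin m) (p q : ℕ) (c c' : ℝ)
    (x : Fin m → ℝ) : (Fin m → ℝ) →L[ℝ] ℝ :=
  ((c * h x ^ monomialFormDegree wt i j p q - c') / monomialFormDegree wt i j p q)
    • eulerContraction wt i j p q x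

theorem contDiff_scalingPrimitive (wt : Fin m → ℕ) {h : (Fin m → ℝ) → ℝ} (hh : ContDiff ℝ ∞ h)
    (i j : Fin m) (p q : ℕ) (c c' : ℝ) :
    ContDiff ℝ ∞ (scalingPrimitive wt h i j p q c c') :=
  (((contDiff_const.mul (hh.pow _)).sub contDiff_const).div_const _).smul
    (contDiff_eulerContraction wt i j p q)

theorem scalingPrimitive_eq_smul_eulerContraction {wt : Fin m → ℕ} {h : (Fin m → ℝ) → ℝ}
    {i j : Fin m} {p q d : ℕ} (hwt : monomialFormDegree wt i j p q = d) (hd : d ≠ 0)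
    {x : Fin m → ℝ} {s : ℝ} (hs : h x ^ d = 1 + d * s) (c c' : ℝ) :
    scalingPrimitive wt h i j p q c c' x
      = ((c - c') / d + c * s) • eulerContraction wt i j p q x := by
  subst hwt
  rw [scalingPrimitive, hs]
  congr 1
  field_simp
  ring

theorem extD1_scalingPrimitive {wt : Fin m → ℕ} {h : (Fin m → ℝ) → ℝ} (hh : ContDiff ℝ 2 h)
    {i j : Fin m} {p q : ℕ} (hd : monomialFormDegree wt i j p q ≠ 0) (c c' : ℝ)
    (x u v : Fin m → ℝ) :
    extD1 m (covectorForm (scalingPrimitive wt h i j p q c c')) x u v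
      = c * pull2 m (weightedScale wt h) (monomialForm i j p q) x u v
        - c' * monomialForm i j p q x u v := by
  set d := monomialFormDegree wt i j p q with d_def
  have hd' : (d : ℝ) ≠ 0 := Nat.cast_ne_zero.2 hd
  have hθ : DifferentiableAt ℝ (eulerContraction wt i j p q) x :=
    (contDiff_eulerContraction wt i j p q).differentiable (by simp) x
  have hhθ : DifferentiableAt ℝ (fun y => h y ^ d • eulerContraction wt i j p q y) x :=
    ((hh.differentiable two_ne_zero x).pow d).smul hθ
  have hsplit : scalingPrimitive wt h i j p q c c'
      = (c / d) • (fun y => h y ^ d • eulerContraction wt i j p q y)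
        - (c' / d) • eulerContraction wt i j p q := by
    funext y
    simp only [scalingPrimitive, Pi.sub_apply, Pi.smul_apply, ← d_def]
    module
  rw [hsplit, extD1_covectorForm_sub (hhθ.const_smul _) (hθ.const_smul _),
    extD1_covectorForm_const_smul hhθ, extD1_covectorForm_const_smul hθ,
    ← pull2_weightedScale_monomialForm wt i j p q hh, extD1_eulerContraction, ← d_def]
  field_simp

end WeightedScaling

section MonomialCurve456

theorem g456_eq_monomialCurve : g456 = monomialCurve ![4, 5, 6] := by
  funext t i
  fin_cases i <;> rfl

theorem contDiff_g456 {n : ℕ∞ω} : ContDiff ℝ n g456 := by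
  rw [g456_eq_monomialCurve]
  exact contDiff_pi.2 fun i => contDiff_id.pow _

/-- The conductor of the numerical semigroup `⟨4, 5, 6⟩` is `8`. -/
theorem pow_mem_curveFunctions_g456 {n : ℕ} (hn : 8 ≤ n) :
    (fun t => t ^ n) ∈ curveFunctions g456 := by
  obtain ⟨i, j, k, rfl⟩ : ∃ i j k, n = 4 * i + 5 * j + 6 * k := by
    obtain h | h | h | h : n % 4 = 0 ∨ n % 4 = 1 ∨ n % 4 = 2 ∨ n % 4 = 3 := by omega
    · exact ⟨n / 4, 0, 0, by omega⟩
    · exact ⟨n / 4 - 1, 1, 0, by omega⟩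
    · exact ⟨n / 4 - 1, 0, 1, by omega⟩
    · exact ⟨n / 4 - 2, 1, 1, by omega⟩
  convert mul_mem (mul_mem (pow_mem (coordinate_mem_curveFunctions g456 0) i)
    (pow_mem (coordinate_mem_curveFunctions g456 1) j))
    (pow_mem (coordinate_mem_curveFunctions g456 2) k) using 1
  funext t
  simp [g456, pow_add, pow_mul]

theorem pow_mul_eval_mem_curveFunctions_g456 {n : ℕ} (hn : 8 ≤ n) (R : ℝ[X]) :
    (fun t => t ^ n * R.eval t) ∈ curveFunctions g456 := by
  have hsum : (fun t => t ^ n * R.eval t)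
      = ∑ k ∈ Finset.range (R.natDegree + 1), R.coeff k • fun t => t ^ (n + k) := by
    funext t
    simp only [R.eval_eq_sum_range, Finset.mul_sum, Finset.sum_apply, Pi.smul_apply, smul_eq_mul]
    exact Finset.sum_congr rfl fun k _ => by ring
  rw [hsum]
  exact sum_mem fun k _ => Subalgebra.smul_mem _ (pow_mem_curveFunctions_g456 (by omega)) _

/-- Generators of the ideal of the curve `g456`. -/
def relation456 : Fin 2 → (Fin 3 → ℝ) → ℝ :=
  ![fun x => x 0 * x 2 - x 1 ^ 2, fun x => x 0 ^ 3 - x 2 ^ 2]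

theorem contDiff_relation456 (i : Fin 2) : ContDiff ℝ ∞ (relation456 i) := by
  fin_cases i <;> dsimp [relation456] <;> fun_prop

theorem relation456_g456 (i : Fin 2) (t : ℝ) : relation456 i (g456 t) = 0 := by
  fin_cases i <;> simp [relation456, g456] <;> ring

theorem fderiv_relation456_zero (t : ℝ) :
    fderiv ℝ (relation456 0) (g456 t)
      = t ^ 6 • .proj 0 - (2 * t ^ 5) • .proj 1 + t ^ 4 • .proj 2 := by
  have hderiv := ((hasFDerivAt_apply (𝕜 := ℝ) (0 : Fin 3) (g456 t)).fun_mul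
    (hasFDerivAt_apply 2 _)).sub ((hasFDerivAt_apply 1 _).pow 2)
  have hderiv' : HasFDerivAt (relation456 0) _ (g456 t) := hderiv
  ext1 u
  rw [hderiv'.fderiv]
  simp only [g456, Matrix.cons_val, Nat.add_one_sub_one, pow_one, nsmul_eq_mul, Nat.cast_ofNat,
    sub_apply, add_apply, smul_apply, ContinuousLinearMap.proj_apply, smul_eq_mul]
  ring

theorem fderiv_relation456_one (t : ℝ) :
    fderiv ℝ (relation456 1) (g456 t) = (3 * t ^ 8) • .proj 0 - (2 * t ^ 6) • .proj 2 := by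
  have hderiv := ((hasFDerivAt_apply (𝕜 := ℝ) (0 : Fin 3) (g456 t)).pow 3).sub
    ((hasFDerivAt_apply 2 _).pow 2)
  have hderiv' : HasFDerivAt (relation456 1) _ (g456 t) := hderiv
  ext1 u
  rw [hderiv'.fderiv]
  simp [g456, ← pow_mul]

/-- The factor by which the curve parameter is rescaled; along `g456` it equals
`1 + a t ^ 6 + b t ^ 8`. -/
def scale456 (a b : ℝ) (x : Fin 3 → ℝ) : ℝ := 1 + a * x 2 + b * x 0 ^ 2

theorem contDiff_scale456 {n : ℕ∞ω} (a b : ℝ) : ContDiff ℝ n (scale456 a b) := by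
  unfold scale456
  fun_prop

theorem exists_scale456_g456_pow_eq (a b : ℝ) {n : ℕ} (hn : n ≠ 0) :
    ∃ R : ℝ[X], ∀ t : ℝ, scale456 a b (g456 t) ^ n
      = 1 + n * (a * t ^ 6 + b * t ^ 8 + t ^ 12 * R.eval t) := by
  let V : ℝ[X] := .C a + .C b * .X ^ 2
  obtain ⟨K, hK⟩ := Polynomial.powAddExpansion 1 (.X ^ 6 * V) n
  refine ⟨.C (n : ℝ)⁻¹ * K * V ^ 2, fun t => ?_⟩
  have hKt := congrArg (Polynomial.eval t) hK
  simp only [V, Polynomial.eval_pow, Polynomial.eval_add, Polynomial.eval_one, Polynomial.eval_mul,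
    Polynomial.eval_X, Polynomial.eval_C, Polynomial.eval_natCast, one_pow, mul_one] at hKt
  simp only [V, scale456, g456, Matrix.cons_val, Polynomial.eval_mul, Polynomial.eval_C,
    Polynomial.eval_pow, Polynomial.eval_add, Polynomial.eval_X]
  field_simp
  linear_combination hKt

/-- The 2-forms `c₀ dx₁∧dx₃ + c₁ dx₂∧dx₃ + c₂ x₁dx₁∧dx₂`, with indices counted from `1`. -/
def normalForm456 (c₀ c₁ c₂ : ℝ) : Form2 3 := fun x u v =>
  c₀ * wedge 3 0 2 x u v + c₁ * wedge 3 1 2 x u v + c₂ * mwedge 3 0 0 1 x u v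

/-- The perturbation of `normalForm456 c₀ c₁ c₂` by the 2-form `c₃ x₃dx₂∧dx₃`. -/
def perturbedForm456 (c₀ c₁ c₂ c₃ : ℝ) : Form2 3 := fun x u v =>
  normalForm456 c₀ c₁ c₂ x u v + c₃ * mwedge 3 2 1 2 x u v

/-- A primitive of `Φ^*(perturbedForm456 c₀ c₁ c₂ c₃) - normalForm456 c₀ c₁ c₂`, where `Φ` is the
weighted scaling by `h`. -/
def primitive456 (h : (Fin 3 → ℝ) → ℝ) (c₀ c₁ c₂ c₃ : ℝ) : (Fin 3 → ℝ) → (Fin 3 → ℝ) →L[ℝ] ℝ :=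
  scalingPrimitive ![4, 5, 6] h 0 2 0 0 c₀ c₀ + scalingPrimitive ![4, 5, 6] h 1 2 0 0 c₁ c₁
    + scalingPrimitive ![4, 5, 6] h 0 1 1 0 c₂ c₂ + scalingPrimitive ![4, 5, 6] h 1 2 0 1 c₃ 0

theorem contDiff_primitive456 {h : (Fin 3 → ℝ) → ℝ} (hh : ContDiff ℝ ∞ h) (c₀ c₁ c₂ c₃ : ℝ) :
    ContDiff ℝ ∞ (primitive456 h c₀ c₁ c₂ c₃) :=
  (((contDiff_scalingPrimitive _ hh _ _ _ _ _ _).add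
    (contDiff_scalingPrimitive _ hh _ _ _ _ _ _)).add
    (contDiff_scalingPrimitive _ hh _ _ _ _ _ _)).add
    (contDiff_scalingPrimitive _ hh _ _ _ _ _ _)

theorem extD1_primitive456 {h : (Fin 3 → ℝ) → ℝ} (hh : ContDiff ℝ ∞ h) (c₀ c₁ c₂ c₃ : ℝ) :
    extD1 3 (covectorForm (primitive456 h c₀ c₁ c₂ c₃)) = fun x u v =>
      pull2 3 (weightedScale ![4, 5, 6] h) (perturbedForm456 c₀ c₁ c₂ c₃) x u v
        - normalForm456 c₀ c₁ c₂ x u v := by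
  funext x u v
  have hdiff (i j : Fin 3) (p q : ℕ) (c c' : ℝ) :
      DifferentiableAt ℝ (scalingPrimitive ![4, 5, 6] h i j p q c c') x :=
    (contDiff_scalingPrimitive _ hh i j p q c c').differentiable (by simp) x
  have hh2 : ContDiff ℝ 2 h := hh.of_le (by norm_cast)
  rw [primitive456, extD1_covectorForm_add (((hdiff ..).add (hdiff ..)).add (hdiff ..)) (hdiff ..),
    extD1_covectorForm_add ((hdiff ..).add (hdiff ..)) (hdiff ..),
    extD1_covectorForm_add (hdiff ..) (hdiff ..)]
  repeat rw [extD1_scalingPrimitive hh2 (by simp [monomialFormDegree])]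
  simp only [pull2, perturbedForm456, normalForm456, monomialForm, wedge, mwedge, pow_zero, pow_one]
  ring

theorem sq_smul_eulerContraction_dx₁dx₃_g456 (t : ℝ) :
    t ^ 2 • eulerContraction ![4, 5, 6] 0 2 0 0 (g456 t)
      = (-2 : ℝ) • fderiv ℝ (relation456 1) (g456 t) := by
  rw [fderiv_relation456_one]
  simp only [eulerContraction, g456, Matrix.cons_val, Nat.cast_ofNat]
  module

theorem smul_eulerContraction_dx₂dx₃_g456 (t : ℝ) :
    t • eulerContraction ![4, 5, 6] 1 2 0 0 (g456 t)
      = (3 * t ^ 2) • fderiv ℝ (relation456 0) (g456 t) - fderiv ℝ (relation456 1) (g456 t) := by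
  rw [fderiv_relation456_zero, fderiv_relation456_one]
  simp only [eulerContraction, g456, Matrix.cons_val, Nat.cast_ofNat]
  module

theorem eulerContraction_x₁dx₁dx₂_g456 (t : ℝ) :
    eulerContraction ![4, 5, 6] 0 1 1 0 (g456 t)
      = (-2 * t ^ 3) • fderiv ℝ (relation456 0) (g456 t)
        - t • fderiv ℝ (relation456 1) (g456 t) := by
  rw [fderiv_relation456_zero, fderiv_relation456_one]
  simp only [eulerContraction, g456, Matrix.cons_val, Nat.cast_ofNat]
  module

theorem eulerContraction_x₃dx₂dx₃_g456 (t : ℝ) :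
    eulerContraction ![4, 5, 6] 1 2 0 1 (g456 t)
      = (3 * t ^ 7) • fderiv ℝ (relation456 0) (g456 t)
        - t ^ 5 • fderiv ℝ (relation456 1) (g456 t) := by
  rw [fderiv_relation456_zero, fderiv_relation456_one]
  simp only [eulerContraction, g456, Matrix.cons_val, Nat.cast_ofNat]
  module

theorem primitive456_g456 {h : (Fin 3 → ℝ) → ℝ} {t w₁₀ w₁₁ w₁₃ w₁₇ : ℝ} (c₀ c₁ c₂ c₃ : ℝ)
    (h₁₀ : h (g456 t) ^ 10 = 1 + 10 * (t ^ 2 * w₁₀)) (h₁₁ : h (g456 t) ^ 11 = 1 + 11 * (t * w₁₁))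
    (h₁₃ : h (g456 t) ^ 13 = 1 + 13 * w₁₃) (h₁₇ : h (g456 t) ^ 17 = 1 + 17 * w₁₇) :
    primitive456 h c₀ c₁ c₂ c₃ (g456 t)
      = (3 * c₁ * t ^ 2 * w₁₁ - 2 * c₂ * t ^ 3 * w₁₃ + 3 * c₃ * t ^ 7 * (1 / 17 + w₁₇))
          • fderiv ℝ (relation456 0) (g456 t)
        + (-2 * c₀ * w₁₀ - c₁ * w₁₁ - c₂ * t * w₁₃ - c₃ * t ^ 5 * (1 / 17 + w₁₇))
          • fderiv ℝ (relation456 1) (g456 t) := by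
  rw [primitive456, Pi.add_apply, Pi.add_apply, Pi.add_apply,
    scalingPrimitive_eq_smul_eulerContraction (d := 10) rfl (by norm_num) (mod_cast h₁₀),
    scalingPrimitive_eq_smul_eulerContraction (d := 11) rfl (by norm_num) (mod_cast h₁₁),
    scalingPrimitive_eq_smul_eulerContraction (d := 13) rfl (by norm_num) (mod_cast h₁₃),
    scalingPrimitive_eq_smul_eulerContraction (d := 17) rfl (by norm_num) (mod_cast h₁₇)]
  linear_combination (norm := module) (c₀ * w₁₀) • sq_smul_eulerContraction_dx₁dx₃_g456 t
    + (c₁ * w₁₁) • smul_eulerContraction_dx₂dx₃_g456 t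
    + (c₂ * w₁₃) • eulerContraction_x₁dx₁dx₂_g456 t
    + (c₃ * (1 / 17 + w₁₇)) • eulerContraction_x₃dx₂dx₃_g456 t

/-- The parameters `a` and `b` are chosen so that the coefficients of both differentials lose their
terms in `t ^ 7`, the only ones whose exponent is a gap of the semigroup `⟨4, 5, 6⟩`. -/
theorem exists_primitive456_g456_eq_sum {c₁ c₂ c₃ a b : ℝ} (c₀ : ℝ) (ha : c₃ = -17 * (c₁ * a))
    (hb : c₁ * b = -(c₂ * a)) :
    ∃ P : Fin 2 → ℝ → ℝ, (∀ i, P i ∈ curveFunctions g456) ∧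
      ∀ t, primitive456 (scale456 a b) c₀ c₁ c₂ c₃ (g456 t)
        = ∑ i, P i t • fderiv ℝ (relation456 i) (g456 t) := by
  obtain ⟨R₁₀, h₁₀⟩ := exists_scale456_g456_pow_eq a b (n := 10) (by norm_num)
  obtain ⟨R₁₁, h₁₁⟩ := exists_scale456_g456_pow_eq a b (n := 11) (by norm_num)
  obtain ⟨R₁₃, h₁₃⟩ := exists_scale456_g456_pow_eq a b (n := 13) (by norm_num)
  obtain ⟨R₁₇, h₁₇⟩ := exists_scale456_g456_pow_eq a b (n := 17) (by norm_num)
  let S₀ : ℝ[X] := .C (3 * c₁) * (.C b * .X + .X ^ 5 * R₁₁)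
    - .C (2 * c₂) * (.C a * .X + .C b * .X ^ 3 + .X ^ 7 * R₁₃)
    + .C (3 * c₃) * (.C a * .X ^ 5 + .C b * .X ^ 7 + .X ^ 11 * R₁₇)
  let S₁ : ℝ[X] := - .C (2 * c₀) * (.X ^ 2 * R₁₀) - .C c₁ * (.X ^ 3 * R₁₁)
    - .C c₂ * (.C b * .X + .X ^ 5 * R₁₃)
    - .C c₃ * (.C a * .X ^ 3 + .C b * .X ^ 5 + .X ^ 9 * R₁₇)
  refine ⟨![fun t => t ^ 8 * S₀.eval t,
    (-2 * c₀ * a) • (fun t => g456 t 0) + (-2 * c₀ * b) • (fun t => g456 t 2)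
      + fun t => t ^ 8 * S₁.eval t], Fin.forall_fin_two.2 ⟨?_, ?_⟩, fun t => ?_⟩
  · exact pow_mul_eval_mem_curveFunctions_g456 le_rfl S₀
  · exact add_mem (add_mem (Subalgebra.smul_mem _ (coordinate_mem_curveFunctions g456 0) _)
      (Subalgebra.smul_mem _ (coordinate_mem_curveFunctions g456 2) _))
      (pow_mul_eval_mem_curveFunctions_g456 le_rfl S₁)
  · rw [primitive456_g456 c₀ c₁ c₂ c₃
      (w₁₀ := a * t ^ 4 + b * t ^ 6 + t ^ 10 * R₁₀.eval t)
      (w₁₁ := a * t ^ 5 + b * t ^ 7 + t ^ 11 * R₁₁.eval t)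
      (by rw [h₁₀]; push_cast; ring) (by rw [h₁₁]; push_cast; ring) (h₁₃ t) (h₁₇ t),
      Fin.sum_univ_two]
    congr 2
    · simp only [S₀, Matrix.cons_val, Polynomial.eval_add, Polynomial.eval_sub,
        Polynomial.eval_mul, Polynomial.eval_pow, Polynomial.eval_C, Polynomial.eval_X]
      linear_combination 3 / 17 * t ^ 7 * ha
    · simp only [S₁, g456, Matrix.cons_val, Pi.add_apply, Pi.smul_apply, smul_eq_mul,
        Polynomial.eval_add, Polynomial.eval_sub, Polynomial.eval_neg, Polynomial.eval_mul,
        Polynomial.eval_pow, Polynomial.eval_C, Polynomial.eval_X]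
      linear_combination -t ^ 5 / 17 * ha - t ^ 7 * hb

end MonomialCurve456

theorem algRestriction_reduction_456_general (c₀ c₁ c₂ c₃ : ℝ) (hc₁ : c₁ ≠ 0) :
    ∃ (Φ : (Fin 3 → ℝ) → (Fin 3 → ℝ)) (φ : ℝ → ℝ),
      IsDiffeoGerm 3 Φ ∧ IsDiffeoGerm1 φ ∧
      (∀ᶠ t in 𝓝 (0 : ℝ), Φ (g456 t) = g456 (φ t)) ∧
      SameAR2 3 (pull2 3 Φ (perturbedForm456 c₀ c₁ c₂ c₃)) (normalForm456 c₀ c₁ c₂) g456 := by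
  obtain ⟨a, ha⟩ : ∃ a, c₃ = -17 * (c₁ * a) := ⟨-c₃ / (17 * c₁), by field_simp⟩
  obtain ⟨b, hb⟩ : ∃ b, c₁ * b = -(c₂ * a) := ⟨-(c₂ * a) / c₁, by field_simp⟩
  have hscale : ContDiff ℝ ∞ (scale456 a b) := contDiff_scale456 a b
  obtain ⟨P, hP, hPeq⟩ := exists_primitive456_g456_eq_sum c₀ ha hb
  refine ⟨weightedScale ![4, 5, 6] (scale456 a b), fun t => t * scale456 a b (g456 t),
    isDiffeoGerm_weightedScale _ hscale (by simp [scale456]),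
    isDiffeoGerm1_id_mul (hscale.comp contDiff_g456) (by simp [scale456, g456]),
    .of_forall fun t => ?_, ?_⟩
  · rw [g456_eq_monomialCurve, weightedScale_monomialCurve]
  · rw [SameAR2, ← extD1_primitive456 hscale]
    exact zeroAR2_extD1_of_eq_sum_fderiv (contDiff_primitive456 hscale c₀ c₁ c₂ c₃)
      contDiff_relation456 relation456_g456 hP hPeq


/-- Lemma 5.4: for `c₁ ≠ 0`, the algebraic restriction to `g(t)=(t⁴,t⁵,t⁶)` of
`±dx₁∧dx₃ + c₁dx₂∧dx₃ + c₂x₁dx₁∧dx₂ + c₃x₃dx₂∧dx₃` is diffeomorphic to that of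
`±dx₁∧dx₃ + c₁dx₂∧dx₃ + c₂x₁dx₁∧dx₂`. -/
theorem algRestriction_reduction_456
    (ε : ℝ) (hε : ε = 1 ∨ ε = -1) (c₁ c₂ c₃ : ℝ) (hc₁ : c₁ ≠ 0) :
    ∃ (Φ : (Fin 3 → ℝ) → (Fin 3 → ℝ)) (φ : ℝ → ℝ),
      IsDiffeoGerm 3 Φ ∧ IsDiffeoGerm1 φ ∧
      (∀ᶠ t in 𝓝 (0 : ℝ), Φ (g456 t) = g456 (φ t)) ∧
      SameAR2 3
        (pull2 3 Φ (fun x u v => ε * wedge 3 0 2 x u v + c₁ * wedge 3 1 2 x u v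
          + c₂ * mwedge 3 0 0 1 x u v + c₃ * mwedge 3 2 1 2 x u v))
        (fun x u v => ε * wedge 3 0 2 x u v + c₁ * wedge 3 1 2 x u v
          + c₂ * mwedge 3 0 0 1 x u v)
        g456 :=
  algRestriction_reduction_456_general ε c₁ c₂ c₃ hc₁
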